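/- arXiv:2509.00743 — 2 statements merged into one kernel-verified Lean document; each statement's English description precedes it below -/
import Mathlib

section
/- Let p and q be real numbers with 0 < p and 0 < q, and let b, c be real numbers such that ξ₁·ξ₂·ξ₃·ξ₄ ≠ 0, where ξ₁ = 1 − pb − qc, ξ₂ = 1 − pb + qc, ξ₃ = 1 + pb + qc, ξ₄ = 1 + pb − qc. Then the total Tanaka–Webster scalar curvature factors through the volume: 2q/(ξ₁ξ₂) + 2p/(ξ₂ξ₃) + 2q/(ξ₃ξ₄) + 2p/(ξ₄ξ₁) = (1/p + 1/q + b²·(p − p²/q) + c²·(q − q²/p)) · 4pq/(ξ₁ξ₂ξ₃ξ₄), i.e. S(ξ) = h(b,c)·V(ξ). Consequently, whenever V(ξ) > 0, the Einstein–Hilbert functional satisfies EH(ξ) = S(ξ)/V(ξ)^{2/3} = h(b,c)·V(ξ)^{1/3}. -/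
/-!
Clearing denominators, each edge of the rectangle contributes its length times the product of the
values of `ξ` at the two vertices off that edge. On opposite edges the two products are values of
the same quadratic polynomial at `± b` or at `± c`, so in their sum all odd terms cancel. What
remains is even in `b` and `c`, and dividing it by `4pq` gives `h(b,c)`. The formula for the
Einstein–Hilbert functional is then `V / V ^ (2/3) = V ^ (1/3)`.
-/

section CommRing

variable {R : Type*} [CommRing R]

/-- The affine function on the moment polytope with which the Reeb vector `(1, b, c)` is
identified. -/
def reebFunction (b c x y : R) : R :=
  1 + b * x + c * y

/-- The product of the values of the Reeb function at the vertices `p₁, p₂, p₃, p₄` of the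
rectangle `[-p, p] × [-q, q]`: the common denominator of the volume and the scalar curvature. -/
def reebVertexProd (p q b c : R) : R :=
  reebFunction b c (-p) (-q) * reebFunction b c (-p) q * reebFunction b c p q *
    reebFunction b c p (-q)

theorem reebFunction_mul_add_mul_vertical_edges (b c p q : R) :
    reebFunction b c (-p) (-q) * reebFunction b c (-p) q +
      reebFunction b c p q * reebFunction b c p (-q) =
        2 * (1 + (b * p) ^ 2 - (c * q) ^ 2) := by
  simp only [reebFunction]
  ring

theorem reebFunction_mul_add_mul_horizontal_edges (b c p q : R) :
    reebFunction b c (-p) q * reebFunction b c p q +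
      reebFunction b c p (-q) * reebFunction b c (-p) (-q) =
        2 * (1 - (b * p) ^ 2 + (c * q) ^ 2) := by
  simp only [reebFunction]
  ring

end CommRing

section Field

variable {K : Type*} [Field K]

/-- The volume `V(ξ)`: the area of the rectangle over the product of the vertex values. -/
def reebVolume (p q b c : K) : K :=
  4 * p * q / reebVertexProd p q b c

/-- The total Tanaka–Webster scalar curvature `S(ξ)`: each edge contributes its length over the
product of the values of the Reeb function at its two endpoints. -/
def reebScalarCurvature (p q b c : K) : K :=
  2 * q / (reebFunction b c (-p) (-q) * reebFunction b c (-p) q) +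
    2 * p / (reebFunction b c (-p) q * reebFunction b c p q) +
    2 * q / (reebFunction b c p q * reebFunction b c p (-q)) +
    2 * p / (reebFunction b c p (-q) * reebFunction b c (-p) (-q))

/-- The factor `h(b,c)` relating the total scalar curvature to the volume. -/
def curvatureFactor (p q b c : K) : K :=
  1 / p + 1 / q + b ^ 2 * (p - p ^ 2 / q) + c ^ 2 * (q - q ^ 2 / p)

theorem curvatureFactor_mul_four_mul {p q : K} (hp : p ≠ 0) (hq : q ≠ 0) (b c : K) :
    curvatureFactor p q b c * (4 * p * q) =
      2 * q * (2 * (1 + (b * p) ^ 2 - (c * q) ^ 2)) +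
        2 * p * (2 * (1 - (b * p) ^ 2 + (c * q) ^ 2)) := by
  rw [curvatureFactor]
  field_simp
  ring

theorem sum_div_mul_cyclic {x₁ x₂ x₃ x₄ : K} (h : x₁ * x₂ * x₃ * x₄ ≠ 0) (k l : K) :
    k / (x₁ * x₂) + l / (x₂ * x₃) + k / (x₃ * x₄) + l / (x₄ * x₁) =
      (k * (x₁ * x₂ + x₃ * x₄) + l * (x₂ * x₃ + x₄ * x₁)) / (x₁ * x₂ * x₃ * x₄) := by
  obtain ⟨⟨⟨h₁, h₂⟩, h₃⟩, h₄⟩ : ((x₁ ≠ 0 ∧ x₂ ≠ 0) ∧ x₃ ≠ 0) ∧ x₄ ≠ 0 := by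
    simpa only [mul_ne_zero_iff] using h
  field_simp
  ring

theorem reebScalarCurvature_eq_curvatureFactor_mul_reebVolume {p q b c : K} (hp : p ≠ 0)
    (hq : q ≠ 0) (h : reebVertexProd p q b c ≠ 0) :
    reebScalarCurvature p q b c = curvatureFactor p q b c * reebVolume p q b c := by
  calc
    reebScalarCurvature p q b c =
        (2 * q * (2 * (1 + (b * p) ^ 2 - (c * q) ^ 2)) +
          2 * p * (2 * (1 - (b * p) ^ 2 + (c * q) ^ 2))) / reebVertexProd p q b c := by
      rw [← reebFunction_mul_add_mul_vertical_edges,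
        ← reebFunction_mul_add_mul_horizontal_edges]
      exact sum_div_mul_cyclic h (2 * q) (2 * p)
    _ = curvatureFactor p q b c * (4 * p * q) / reebVertexProd p q b c := by
      rw [curvatureFactor_mul_four_mul hp hq]
    _ = curvatureFactor p q b c * reebVolume p q b c := mul_div_assoc _ _ _

end Field

/-- The Einstein–Hilbert functional `EH(ξ)`; the exponent makes it invariant under scaling of the
Reeb vector, the circle bundle being of dimension five. -/
noncomputable def einsteinHilbert (p q b c : ℝ) : ℝ :=
  reebScalarCurvature p q b c / reebVolume p q b c ^ ((2 : ℝ) / 3)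

theorem einsteinHilbert_eq_curvatureFactor_mul_rpow {p q b c : ℝ} (hp : p ≠ 0) (hq : q ≠ 0)
    (hV : 0 < reebVolume p q b c) :
    einsteinHilbert p q b c = curvatureFactor p q b c * reebVolume p q b c ^ ((1 : ℝ) / 3) := by
  have hprod : reebVertexProd p q b c ≠ 0 := (div_ne_zero_iff.mp hV.ne').2
  have hpow : reebVolume p q b c / reebVolume p q b c ^ ((2 : ℝ) / 3) =
      reebVolume p q b c ^ ((1 : ℝ) / 3) := by
    calc
      reebVolume p q b c / reebVolume p q b c ^ ((2 : ℝ) / 3) =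
          reebVolume p q b c ^ (1 : ℝ) / reebVolume p q b c ^ ((2 : ℝ) / 3) := by
        rw [Real.rpow_one]
      _ = reebVolume p q b c ^ ((1 : ℝ) - 2 / 3) := (Real.rpow_sub hV _ _).symm
      _ = reebVolume p q b c ^ ((1 : ℝ) / 3) := by norm_num
  rw [einsteinHilbert, reebScalarCurvature_eq_curvatureFactor_mul_reebVolume hp hq hprod,
    mul_div_assoc, hpow]

/-- toric computation of the Einstein–Hilbert functional on the
Sasaki–Reeb cone of the circle bundle over ℙ¹×ℙ¹: the total Tanaka–Webster
scalar curvature `S(ξ)` factors as `h(b,c) · V(ξ)`, and consequently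
`EH(ξ) = S(ξ)/V(ξ)^{2/3} = h(b,c) · V(ξ)^{1/3}` whenever `V(ξ) > 0`. -/
theorem stmt0 (p q b c : ℝ) (hp : 0 < p) (hq : 0 < q)
    (ξ1 ξ2 ξ3 ξ4 : ℝ)
    (hξ1 : ξ1 = 1 - p * b - q * c) (hξ2 : ξ2 = 1 - p * b + q * c)
    (hξ3 : ξ3 = 1 + p * b + q * c) (hξ4 : ξ4 = 1 + p * b - q * c)
    (hne : ξ1 * ξ2 * ξ3 * ξ4 ≠ 0) :
    (2 * q / (ξ1 * ξ2) + 2 * p / (ξ2 * ξ3) + 2 * q / (ξ3 * ξ4) + 2 * p / (ξ4 * ξ1)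
      = (1 / p + 1 / q + b ^ 2 * (p - p ^ 2 / q) + c ^ 2 * (q - q ^ 2 / p))
          * (4 * p * q / (ξ1 * ξ2 * ξ3 * ξ4)))
    ∧ (0 < 4 * p * q / (ξ1 * ξ2 * ξ3 * ξ4) →
        (2 * q / (ξ1 * ξ2) + 2 * p / (ξ2 * ξ3) + 2 * q / (ξ3 * ξ4) + 2 * p / (ξ4 * ξ1))
            / (4 * p * q / (ξ1 * ξ2 * ξ3 * ξ4)) ^ ((2 : ℝ) / 3)
          = (1 / p + 1 / q + b ^ 2 * (p - p ^ 2 / q) + c ^ 2 * (q - q ^ 2 / p))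
              * (4 * p * q / (ξ1 * ξ2 * ξ3 * ξ4)) ^ ((1 : ℝ) / 3)) := by
  obtain rfl : ξ1 = reebFunction b c (-p) (-q) := by rw [hξ1, reebFunction]; ring
  obtain rfl : ξ2 = reebFunction b c (-p) q := by rw [hξ2, reebFunction]; ring
  obtain rfl : ξ3 = reebFunction b c p q := by rw [hξ3, reebFunction]; ring
  obtain rfl : ξ4 = reebFunction b c p (-q) := by rw [hξ4, reebFunction]; ring
  exact ⟨reebScalarCurvature_eq_curvatureFactor_mul_reebVolume hp.ne' hq.ne' hne,
    einsteinHilbert_eq_curvatureFactor_mul_rpow hp.ne' hq.ne'⟩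
end

section
/- Let μ be a probability measure on a measurable space N, let n ≥ 1 be a natural number, and set q = 2 + 2/n. Let u : N → [0,∞) be measurable with ∫_N u^{q} dμ = 1, and let m < 0 and ε ≥ 0 satisfy (m − ε)·∫_N u^{q−2} dμ ≤ m. Then for every real k with q − 2 ≤ k ≤ q one has (|m|/(|m| + ε))^{k/(q−2)} ≤ ∫_N u^{k} dμ ≤ 1, where the integrals are Lebesgue integrals valued in [0,∞]. -/
open MeasureTheory

/-! Since `μ` has mass at most `1`, Hölder's inequality gives `∫ u ^ s ≤ (∫ u ^ r) ^ (s / r)` for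
`0 < s ≤ r`. The upper bound is the case `s = k`, `r = q`. The hypothesis on `m` and `ε` bounds
`∫ u ^ (q - 2)` below by `|m| / (|m| + ε)`, and the case `s = q - 2`, `r = k` carries this bound
over to `∫ u ^ k`. -/

section LebesgueIntegral

variable {α E : Type*} [MeasurableSpace α] {μ : Measure α}

theorem lintegral_ofReal_rpow_eq_lintegral_enorm_rpow {u : α → ℝ} (hu : 0 ≤ᵐ[μ] u)
    {s : ℝ} (hs : 0 ≤ s) :
    ∫⁻ x, ENNReal.ofReal (u x ^ s) ∂μ = ∫⁻ x, ‖u x‖ₑ ^ s ∂μ := by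
  refine lintegral_congr_ae (hu.mono fun x hx => ?_)
  simp only [Real.enorm_of_nonneg hx, ENNReal.ofReal_rpow_of_nonneg hx hs]

variable [TopologicalSpace E] [ContinuousENorm E] {f : α → E} {p r : ℝ}

theorem lintegral_enorm_rpow_le_mul_measure_univ (hf : AEStronglyMeasurable f μ)
    (hp : 0 < p) (hpr : p ≤ r) :
    ∫⁻ x, ‖f x‖ₑ ^ p ∂μ ≤ (∫⁻ x, ‖f x‖ₑ ^ r ∂μ) ^ (p / r) * μ Set.univ ^ (1 - p / r) := by
  calc ∫⁻ x, ‖f x‖ₑ ^ p ∂μ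
      = eLpNorm' f p μ ^ p := lintegral_rpow_enorm_eq_rpow_eLpNorm' hp
    _ ≤ (eLpNorm' f r μ * μ Set.univ ^ (1 / p - 1 / r)) ^ p := by
        gcongr
        exact eLpNorm'_le_eLpNorm'_mul_rpow_measure_univ hp hpr hf
    _ = (∫⁻ x, ‖f x‖ₑ ^ r ∂μ) ^ (p / r) * μ Set.univ ^ (1 - p / r) := by
        rw [ENNReal.mul_rpow_of_nonneg _ _ hp.le, eLpNorm'_eq_lintegral_enorm,
          ← ENNReal.rpow_mul, ← ENNReal.rpow_mul, sub_mul, one_div_mul_cancel hp.ne',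
          one_div_mul_eq_div]

theorem lintegral_enorm_rpow_le_rpow_of_measure_univ_le_one (hμ : μ Set.univ ≤ 1)
    (hf : AEStronglyMeasurable f μ) (hp : 0 < p) (hpr : p ≤ r) :
    ∫⁻ x, ‖f x‖ₑ ^ p ∂μ ≤ (∫⁻ x, ‖f x‖ₑ ^ r ∂μ) ^ (p / r) := by
  have hmass : μ Set.univ ^ (1 - p / r) ≤ 1 :=
    ENNReal.rpow_le_one hμ (sub_nonneg.2 (div_le_one_of_le₀ hpr (hp.le.trans hpr)))
  exact (lintegral_enorm_rpow_le_mul_measure_univ hf hp hpr).trans (mul_le_of_le_one_right' hmass)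

theorem lintegral_enorm_rpow_le_one_of_measure_univ_le_one (hμ : μ Set.univ ≤ 1)
    (hf : AEStronglyMeasurable f μ) (hp : 0 < p) (hpr : p ≤ r)
    (hr : ∫⁻ x, ‖f x‖ₑ ^ r ∂μ ≤ 1) : ∫⁻ x, ‖f x‖ₑ ^ p ∂μ ≤ 1 :=
  (lintegral_enorm_rpow_le_rpow_of_measure_univ_le_one hμ hf hp hpr).trans
    (ENNReal.rpow_le_one hr (div_nonneg hp.le (hp.le.trans hpr)))

theorem rpow_le_lintegral_enorm_rpow_of_measure_univ_le_one (hμ : μ Set.univ ≤ 1)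
    (hf : AEStronglyMeasurable f μ) (hp : 0 < p) (hpr : p ≤ r) {c : ENNReal}
    (hc : c ≤ ∫⁻ x, ‖f x‖ₑ ^ p ∂μ) : c ^ (r / p) ≤ ∫⁻ x, ‖f x‖ₑ ^ r ∂μ := by
  rw [← ENNReal.le_rpow_inv_iff (div_pos (hp.trans_le hpr) hp), inv_div]
  exact hc.trans (lintegral_enorm_rpow_le_rpow_of_measure_univ_le_one hμ hf hp hpr)

end LebesgueIntegral

section EnergyRatio

variable {m ε I : ℝ}

theorem abs_add_pos_of_sub_mul_le (hm : m < 0) (hI : 0 ≤ I) (h : (m - ε) * I ≤ m) :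
    0 < |m| + ε := by
  have hsub : m - ε < 0 := neg_of_mul_neg_left (h.trans_lt hm) hI
  rw [abs_of_neg hm]
  linarith

theorem abs_div_abs_add_le_of_sub_mul_le (hm : m < 0) (hI : 0 ≤ I) (h : (m - ε) * I ≤ m) :
    |m| / (|m| + ε) ≤ I := by
  rw [div_le_iff₀ (abs_add_pos_of_sub_mul_le hm hI h), abs_of_neg hm]
  linarith

end EnergyRatio

theorem stmt9_general {N : Type*} [MeasurableSpace N] {μ : Measure N} (hμ : μ Set.univ ≤ 1)
    {p q : ℝ} (hp : 0 < p) {u : N → ℝ} (hu : AEMeasurable u μ) (hupos : 0 ≤ᵐ[μ] u)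
    (hq : ∫⁻ x, ENNReal.ofReal (u x ^ q) ∂μ ≤ 1) {m ε : ℝ} (hm : m < 0)
    (h : (m - ε) * (∫⁻ x, ENNReal.ofReal (u x ^ p) ∂μ).toReal ≤ m)
    {k : ℝ} (hpk : p ≤ k) (hkq : k ≤ q) :
    ENNReal.ofReal ((|m| / (|m| + ε)) ^ (k / p)) ≤ ∫⁻ x, ENNReal.ofReal (u x ^ k) ∂μ ∧
      ∫⁻ x, ENNReal.ofReal (u x ^ k) ∂μ ≤ 1 := by
  have hk : 0 < k := hp.trans_le hpk
  have hratio : 0 ≤ |m| / (|m| + ε) :=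
    div_nonneg (abs_nonneg m) (abs_add_pos_of_sub_mul_le hm ENNReal.toReal_nonneg h).le
  have hlower := ENNReal.ofReal_le_of_le_toReal
    (abs_div_abs_add_le_of_sub_mul_le hm ENNReal.toReal_nonneg h)
  rw [lintegral_ofReal_rpow_eq_lintegral_enorm_rpow hupos hp.le] at hlower
  rw [lintegral_ofReal_rpow_eq_lintegral_enorm_rpow hupos (hk.le.trans hkq)] at hq
  rw [lintegral_ofReal_rpow_eq_lintegral_enorm_rpow hupos hk.le,
    ← ENNReal.ofReal_rpow_of_nonneg hratio (div_nonneg hk.le hp.le)]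
  have hmeas := hu.aestronglyMeasurable
  exact ⟨rpow_le_lintegral_enorm_rpow_of_measure_univ_le_one hμ hmeas hp hpk hlower,
    lintegral_enorm_rpow_le_one_of_measure_univ_le_one hμ hmeas hk hkq hq⟩

/-- general-exponent form of Lemma 4.5. On a probability space, if
`u ≥ 0` is measurable with `∫ u^q dμ = 1` (`q = 2 + 2/n`, integrals valued in
`[0,∞]`), `m < 0`, `ε ≥ 0` and `(m − ε)·∫ u^{q−2} dμ ≤ m`, then for every `k` with
`q − 2 ≤ k ≤ q` one has `(|m|/(|m|+ε))^{k/(q−2)} ≤ ∫ u^k dμ ≤ 1`. -/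
theorem stmt9 {N : Type*} [MeasurableSpace N] (μ : Measure N) [IsProbabilityMeasure μ]
    (n : ℕ) (hn : 1 ≤ n) (q : ℝ) (hq : q = 2 + 2 / n)
    (u : N → ℝ) (hu : Measurable u) (hupos : ∀ x, 0 ≤ u x)
    (hnorm : ∫⁻ x, ENNReal.ofReal (u x ^ q) ∂μ = 1)
    (m ε : ℝ) (hm : m < 0) (hε : 0 ≤ ε)
    (h : (m - ε) * (∫⁻ x, ENNReal.ofReal (u x ^ (q - 2)) ∂μ).toReal ≤ m) :
    ∀ k : ℝ, q - 2 ≤ k → k ≤ q →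
      ENNReal.ofReal ((|m| / (|m| + ε)) ^ (k / (q - 2)))
          ≤ ∫⁻ x, ENNReal.ofReal (u x ^ k) ∂μ ∧
        ∫⁻ x, ENNReal.ofReal (u x ^ k) ∂μ ≤ 1 := by
  have hp : 0 < q - 2 := by
    rw [hq, add_sub_cancel_left]
    exact div_pos two_pos (Nat.cast_pos.2 hn)
  exact fun _ => stmt9_general prob_le_one hp hu.aemeasurable (.of_forall hupos) hnorm.le hm h
end
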